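/- The commutator subgroup of the Basilica group absorbs pairs: for all g, h in the commutator subgroup ⁅B, B⁆ of the Basilica group B, the permutation pair g h also belongs to ⁅B, B⁆ (i.e. ⁅B,B⁆ × ⁅B,B⁆, embedded via pair, is contained in ⁅B,B⁆). -/

import Mathlib

/-!
The group `⁅B, B⁆` is the normal closure in `B` of the single commutator `⁅b, a⁆`. Write `(g, h)`
for `pair g h`. The recursion gives `a = (1, b)` and `b ^ 2 = (a, a)`, so
`⁅a, b ^ 2⁆ = (1, ⁅b, a⁆)` lies in `⁅B, B⁆`. Conjugating `(1, k)` by `a` and by `b ^ 2` conjugates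
`k` by `b` and by `a`; as `⁅B, B⁆` is normalized by `B`, the subgroup of all `k` with
`(1, k) ∈ ⁅B, B⁆` is normalized by `B`, hence contains `⁅B, B⁆`. Finally `b⁻¹ (1, k) b = (k, 1)`
transports this to the other coordinate, and `(g, h) = (g, 1) (1, h)`.
-/

namespace Basilica

mutual
  /-- Underlying map of the Basilica generator `a`. -/
  def aF : List Bool → List Bool
    | [] => []
    | false :: w => false :: w
    | true :: w => true :: bF w
  /-- Underlying map of the Basilica generator `b`. -/
  def bF : List Bool → List Bool
    | [] => []
    | false :: w => true :: w
    | true :: w => false :: aF w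
end

mutual
  /-- Inverse of `aF`. -/
  def aI : List Bool → List Bool
    | [] => []
    | false :: w => false :: w
    | true :: w => true :: bI w
  /-- Inverse of `bF`. -/
  def bI : List Bool → List Bool
    | [] => []
    | false :: w => true :: aI w
    | true :: w => false :: w
end

theorem basilica_inv : ∀ w : List Bool,
    aI (aF w) = w ∧ bI (bF w) = w ∧ aF (aI w) = w ∧ bF (bI w) = w := by
  intro w
  induction w with
  | nil => simp [aF, bF, aI, bI]
  | cons x w ih =>
    cases x <;>
      simp [aF, bF, aI, bI, ih.1, ih.2.1, ih.2.2.1, ih.2.2.2]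

/-- The Basilica generator `a` as a permutation of the binary tree `List Bool`:
`a [] = []`, `a (false :: w) = false :: w`, `a (true :: w) = true :: b w`. -/
def a : Equiv.Perm (List Bool) :=
  ⟨aF, aI, fun w => (basilica_inv w).1, fun w => (basilica_inv w).2.2.1⟩

/-- The Basilica generator `b` as a permutation of the binary tree `List Bool`:
`b [] = []`, `b (false :: w) = true :: w`, `b (true :: w) = false :: a w`. -/
def b : Equiv.Perm (List Bool) :=
  ⟨bF, bI, fun w => (basilica_inv w).2.1, fun w => (basilica_inv w).2.2.2⟩

/-- Underlying map of the pair `(g, h)` acting on the two subtrees. -/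
def pairF (g h : List Bool → List Bool) : List Bool → List Bool
  | [] => []
  | false :: w => false :: g w
  | true :: w => true :: h w

/-- The permutation of `List Bool` acting as `g` on the subtree below `false`
and as `h` on the subtree below `true`, fixing the root. -/
def pair (g h : Equiv.Perm (List Bool)) : Equiv.Perm (List Bool) :=
  ⟨pairF g h, pairF g.symm h.symm,
    fun w => by cases w with
      | nil => rfl
      | cons x w => cases x <;> simp [pairF],
    fun w => by cases w with
      | nil => rfl
      | cons x w => cases x <;> simp [pairF]⟩

/-- The Basilica group: the subgroup of `Equiv.Perm (List Bool)` generated by `a` and `b`. -/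
def B : Subgroup (Equiv.Perm (List Bool)) := Subgroup.closure {a, b}

end Basilica

namespace Basilica

open scoped commutatorElement

theorem pair_mul (g h g' h' : Equiv.Perm (List Bool)) :
    pair g h * pair g' h' = pair (g * g') (h * h') := by
  ext1 w
  rcases w with _ | ⟨_ | _, w⟩ <;> rfl

theorem pair_one_one : pair 1 1 = 1 := by
  ext1 w
  rcases w with _ | ⟨_ | _, w⟩ <;> rfl

theorem pair_inv (g h : Equiv.Perm (List Bool)) : (pair g h)⁻¹ = pair g⁻¹ h⁻¹ :=
  inv_eq_of_mul_eq_one_right (by rw [pair_mul, mul_inv_cancel, mul_inv_cancel, pair_one_one])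

theorem a_eq_pair : a = pair 1 b := by
  ext1 w
  rcases w with _ | ⟨_ | _, w⟩ <;> simp [a, b, pair, pairF, aF]

theorem b_mul_b : b * b = pair a a := by
  ext1 w
  rcases w with _ | ⟨_ | _, w⟩ <;> simp [a, b, pair, pairF, bF]

theorem pair_one_mul_b (k : Equiv.Perm (List Bool)) :
    pair 1 k * b = b * pair k 1 := by
  ext1 w
  rcases w with _ | ⟨_ | _, w⟩ <;> simp [b, pair, pairF, bF]

theorem a_mem : a ∈ B := Subgroup.subset_closure (by simp)

theorem b_mem : b ∈ B := Subgroup.subset_closure (by simp)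

theorem conj_mem_iff {g : Equiv.Perm (List Bool)} (hg : g ∈ B) (c : Equiv.Perm (List Bool)) :
    c ∈ ⁅B, B⁆ ↔ g * c * g⁻¹ ∈ ⁅B, B⁆ := by
  have key : ∀ x ∈ B, ∀ c ∈ ⁅B, B⁆, x * c * x⁻¹ ∈ ⁅B, B⁆ := by
    intro x hx c hc
    have hcB : c ∈ B := Subgroup.commutator_le_self B hc
    have := mul_mem (Subgroup.commutator_mem_commutator hx hcB) hc
    rwa [commutatorElement_def, inv_mul_cancel_right] at this
  refine ⟨key g hg c, fun h => ?_⟩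
  have := key g⁻¹ (inv_mem hg) _ h
  simpa [mul_assoc] using this

/-- A subgroup normalized by `closure S` and containing the commutators of elements of `S` contains
the commutator subgroup of `closure S`. -/
theorem commutator_closure_le {G : Type*} [Group G] (S : Set G) (K : Subgroup G)
    (hS : ∀ s ∈ S, ∀ k, k ∈ K ↔ s * k * s⁻¹ ∈ K) (hK : ∀ s ∈ S, ∀ t ∈ S, ⁅s, t⁆ ∈ K) :
    ⁅Subgroup.closure S, Subgroup.closure S⁆ ≤ K := by
  have hN : ∀ x ∈ Subgroup.closure S, ∀ k ∈ K, x * k * x⁻¹ ∈ K := by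
    have hle : Subgroup.closure S ≤ Subgroup.normalizer (K : Set G) :=
      (Subgroup.closure_le _).2 fun s hs => Subgroup.mem_normalizer_iff.2 (hS s hs)
    exact fun x hx k hk => (Subgroup.mem_normalizer_iff.1 (hle hx) k).1 hk
  refine Subgroup.commutator_le.2 fun x hx y hy => ?_
  induction hx, hy using Subgroup.closure_induction₂ with
  | mem x y hx hy => exact hK x hx y hy
  | one_left x hx => simp
  | one_right x hx => simp
  | mul_left x y z hx hy hz h₁ h₂ =>
    have := mul_mem (hN x hx _ h₂) h₁
    convert this using 1
    simp only [commutatorElement_def]; group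
  | mul_right x y z hx hy hz h₁ h₂ =>
    have := mul_mem h₁ (hN x hx _ h₂)
    convert this using 1
    simp only [commutatorElement_def]; group
  | inv_left x y hx hy h =>
    have := hN _ (inv_mem hx) _ (inv_mem h)
    convert this using 1
    simp only [commutatorElement_def]; group
  | inv_right x y hx hy h =>
    have := hN _ (inv_mem hy) _ (inv_mem h)
    convert this using 1
    simp only [commutatorElement_def]; group

/-- The subgroup of those `k` for which `pair 1 k` lies in `⁅B, B⁆`. -/
def rightSections : Subgroup (Equiv.Perm (List Bool)) where
  carrier := {k | pair 1 k ∈ ⁅B, B⁆}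
  one_mem' := by
    rw [Set.mem_ofPred_eq, pair_one_one]
    exact one_mem _
  mul_mem' {x y} hx hy := by
    have := mul_mem (Set.mem_ofPred_eq ▸ hx) (Set.mem_ofPred_eq ▸ hy)
    rwa [pair_mul, one_mul] at this
  inv_mem' {x} hx := by
    have := inv_mem (Set.mem_ofPred_eq ▸ hx)
    rwa [pair_inv, inv_one] at this

theorem mem_rightSections {k : Equiv.Perm (List Bool)} :
    k ∈ rightSections ↔ pair 1 k ∈ ⁅B, B⁆ := Iff.rfl

theorem commutator_b_a_mem : ⁅b, a⁆ ∈ rightSections := by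
  have h : ⁅pair 1 b, pair a a⁆ ∈ ⁅B, B⁆ := by
    rw [← a_eq_pair, ← b_mul_b]
    exact Subgroup.commutator_mem_commutator a_mem (mul_mem b_mem b_mem)
  simpa [mem_rightSections, commutatorElement_def, pair_mul, pair_inv] using h

theorem commutator_le_rightSections : ⁅B, B⁆ ≤ rightSections := by
  refine commutator_closure_le {a, b} _ ?_ ?_
  · rintro s (rfl | rfl) k
    · have h := conj_mem_iff (mul_mem b_mem b_mem) (pair 1 k)
      rw [b_mul_b, pair_inv, pair_mul, pair_mul, mul_one, mul_inv_cancel] at h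
      exact h
    · have h := conj_mem_iff a_mem (pair 1 k)
      rw [a_eq_pair, pair_inv, pair_mul, pair_mul, mul_one, mul_inv_cancel] at h
      exact h
  · rintro s (rfl | rfl) t (rfl | rfl)
    · simp
    · rw [← commutatorElement_inv]
      exact inv_mem commutator_b_a_mem
    · exact commutator_b_a_mem
    · simp

end Basilica

open Basilica in
/-- The commutator subgroup of the Basilica group absorbs pairs:
if `g, h ∈ ⁅B, B⁆` then `pair g h ∈ ⁅B, B⁆`. -/
theorem basilica_commutator_pair (g h : Equiv.Perm (List Bool))
    (hg : g ∈ ⁅B, B⁆) (hh : h ∈ ⁅B, B⁆) :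
    pair g h ∈ ⁅B, B⁆ := by
  have hr : ∀ k ∈ ⁅B, B⁆, pair 1 k ∈ ⁅B, B⁆ := fun k hk => commutator_le_rightSections hk
  have hl : pair g 1 ∈ ⁅B, B⁆ := by
    rw [conj_mem_iff b_mem, ← pair_one_mul_b g, mul_inv_cancel_right]
    exact hr g hg
  have := mul_mem hl (hr h hh)
  rwa [pair_mul, mul_one, one_mul] at this
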